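/- arXiv:1307.0443 — 3 statements merged into one kernel-verified Lean document; each statement's English description precedes it below -/
import Mathlib

section
/- For an odd prime p and nonzero t ∈ F_p, the special orthogonal group SO(g_t) of the binary quadratic form g_t(x,y) = x² − t·y² over F_p is a cyclic group of order p − χ(t), where χ is the quadratic character mod p. -/
/-- The special orthogonal group of the binary quadratic form
`g_t(x,y) = x² - t y²` over `𝔽_p`: invertible 2×2 matrices of determinant 1
preserving the form. -/
def SOgt (p : ℕ) [Fact p.Prime] (t : ZMod p) :
    Subgroup (Matrix (Fin 2) (Fin 2) (ZMod p))ˣ where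
  carrier := {M | ((M : Matrix (Fin 2) (Fin 2) (ZMod p)).det = 1 ∧
    ∀ v : Fin 2 → ZMod p,
      ((M : Matrix (Fin 2) (Fin 2) (ZMod p)).mulVec v 0) ^ 2
        - t * ((M : Matrix (Fin 2) (Fin 2) (ZMod p)).mulVec v 1) ^ 2
      = (v 0) ^ 2 - t * (v 1) ^ 2)}
  one_mem' := by
    constructor
    · simp
    · intro v; simp
  mul_mem' := by
    rintro A B ⟨hA, hAQ⟩ ⟨hB, hBQ⟩
    constructor
    · simp [Matrix.det_mul, hA, hB]
    · intro v
      rw [Units.val_mul, ← Matrix.mulVec_mulVec]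
      rw [hAQ, hBQ]
  inv_mem' := by
    rintro M ⟨hM, hMQ⟩
    have h : ((M⁻¹ : (Matrix (Fin 2) (Fin 2) (ZMod p))ˣ) : Matrix (Fin 2) (Fin 2) (ZMod p))
        * (M : Matrix (Fin 2) (Fin 2) (ZMod p)) = 1 := by
      rw [← Units.val_mul, inv_mul_cancel, Units.val_one]
    constructor
    · have := congrArg Matrix.det h
      rwa [Matrix.det_mul, hM, mul_one, Matrix.det_one] at this
    · intro v
      have h1 : (M : Matrix (Fin 2) (Fin 2) (ZMod p)).mulVec
          (((M⁻¹ : (Matrix (Fin 2) (Fin 2) (ZMod p))ˣ) : Matrix (Fin 2) (Fin 2) (ZMod p)).mulVec v) = v := by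
        rw [Matrix.mulVec_mulVec, ← Units.val_mul, mul_inv_cancel, Units.val_one, Matrix.one_mulVec]
      have h2 := hMQ (((M⁻¹ : (Matrix (Fin 2) (Fin 2) (ZMod p))ˣ) : Matrix (Fin 2) (Fin 2) (ZMod p)).mulVec v)
      rw [h1] at h2
      exact h2.symm

/-!
Over a field `F` of odd order `q`, the form `g_t` is the norm form of `A = F[X] / (X² - t)`, and
`SO(g_t)` consists of the multiplications by elements of `A` of norm one. If `t = s²`, then `X ↦ s`
identifies these elements with `Fˣ`. If `t` is not a square, then `A` is a field with `q²` elements,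
so they form a cyclic group, whose order is `(q² - 1) / (q - 1)` because the norm `Aˣ → Fˣ` is
surjective.
-/

open QuadraticMap Matrix

section SpecialOrthogonal

variable {n R : Type*} [Fintype n] [DecidableEq n] [CommRing R]

/-- The special orthogonal group of a quadratic form on `Rⁿ`, as a group of invertible matrices.
The form may be degenerate. -/
def specialOrthogonalSubgroup (Q : QuadraticForm R (n → R)) : Subgroup (Matrix n n R)ˣ where
  carrier := {M | M.val.det = 1 ∧ ∀ v, Q (M.val *ᵥ v) = Q v}
  one_mem' := by simp
  mul_mem' := by
    rintro A B ⟨hA, hAQ⟩ ⟨hB, hBQ⟩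
    exact ⟨by simp [hA, hB], fun v ↦ by rw [Units.val_mul, ← mulVec_mulVec, hAQ, hBQ]⟩
  inv_mem' := by
    rintro M ⟨hM, hMQ⟩
    refine ⟨by simp [hM], fun v ↦ ?_⟩
    rw [← hMQ, mulVec_mulVec, M.mul_inv, one_mulVec]

theorem mem_specialOrthogonalSubgroup {Q : QuadraticForm R (n → R)} {M : (Matrix n n R)ˣ} :
    M ∈ specialOrthogonalSubgroup Q ↔ M.val.det = 1 ∧ ∀ v, Q (M.val *ᵥ v) = Q v :=
  Iff.rfl

theorem weightedSumSquares_one_neg_apply (t : R) (v : Fin 2 → R) :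
    weightedSumSquares R ![1, -t] v = v 0 ^ 2 - t * v 1 ^ 2 := by
  simp [weightedSumSquares_apply, pow_two, sub_eq_add_neg]

theorem SOgt_eq_specialOrthogonalSubgroup (p : ℕ) [Fact p.Prime] (t : ZMod p) :
    SOgt p t = specialOrthogonalSubgroup (weightedSumSquares (ZMod p) ![1, -t]) := by
  ext M
  simp only [mem_specialOrthogonalSubgroup, weightedSumSquares_one_neg_apply]
  rfl

theorem entries_of_mem_specialOrthogonalSubgroup (h2 : IsLeftRegular (2 : R)) {t : R}
    {M : (Matrix (Fin 2) (Fin 2) R)ˣ}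
    (hM : M ∈ specialOrthogonalSubgroup (weightedSumSquares R ![1, -t])) :
    M.val 1 1 = M.val 0 0 ∧ M.val 0 1 = t * M.val 1 0 ∧
      M.val 0 0 ^ 2 - t * M.val 1 0 ^ 2 = 1 := by
  simp only [mem_specialOrthogonalSubgroup, weightedSumSquares_one_neg_apply, det_fin_two,
    mulVec, dotProduct, Fin.sum_univ_two] at hM
  obtain ⟨hdet, hQ⟩ := hM
  have norm_col_zero : M.val 0 0 ^ 2 - t * M.val 1 0 ^ 2 = 1 := by simpa using hQ ![1, 0]
  have norm_col_one : M.val 0 1 ^ 2 - t * M.val 1 1 ^ 2 = -t := by simpa using hQ ![0, 1]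
  have norm_col_add : (M.val 0 0 + M.val 0 1) ^ 2 - t * (M.val 1 0 + M.val 1 1) ^ 2 = 1 - t := by
    simpa using hQ ![1, 1]
  have cols_orthogonal : M.val 0 0 * M.val 0 1 = t * (M.val 1 0 * M.val 1 1) :=
    h2 (by linear_combination norm_col_add - norm_col_zero - norm_col_one)
  refine ⟨?_, ?_, norm_col_zero⟩
  · linear_combination
      -M.val 1 1 * norm_col_zero + M.val 0 0 * hdet + M.val 1 0 * cols_orthogonal
  · linear_combination
      -M.val 0 1 * norm_col_zero + M.val 0 0 * cols_orthogonal + t * M.val 1 0 * hdet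

end SpecialOrthogonal

section NormOne

variable {R : Type*} [CommRing R] {a b : R}

/-- The group of units of norm one of the quadratic algebra `R[X] / (X² - b X - a)`, realised as a
kernel in the group of units so that index formulas apply to it. -/
def normOneUnits (a b : R) : Subgroup (QuadraticAlgebra R a b)ˣ :=
  (Units.map (QuadraticAlgebra.norm (R := R) (a := a) (b := b))).ker

theorem mem_normOneUnits {z : (QuadraticAlgebra R a b)ˣ} :
    z ∈ normOneUnits a b ↔ z.val.norm = 1 := by
  simp [normOneUnits, MonoidHom.mem_ker, Units.ext_iff]

theorem exists_mem_normOneUnits {z : QuadraticAlgebra R a b} (hz : z.norm = 1) :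
    ∃ u ∈ normOneUnits a b, u.val = z := by
  obtain ⟨u, rfl⟩ := QuadraticAlgebra.isUnit_iff_norm_isUnit.2 (hz ▸ isUnit_one)
  exact ⟨u, mem_normOneUnits.2 hz, rfl⟩

theorem leftMulMatrix_quadraticAlgebra_basis (z : QuadraticAlgebra R a b) :
    Algebra.leftMulMatrix (QuadraticAlgebra.basis a b) z =
      !![z.re, a * z.im; z.im, z.re + b * z.im] := by
  ext i j
  rw [Algebra.leftMulMatrix_eq_repr_mul, QuadraticAlgebra.basis_repr_apply]
  fin_cases i <;> fin_cases j <;> simp [QuadraticAlgebra.basis, QuadraticAlgebra.linearEquivTuple]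

theorem specialOrthogonalSubgroup_eq_map_normOneUnits (h2 : IsLeftRegular (2 : R)) (t : R) :
    specialOrthogonalSubgroup (weightedSumSquares R ![1, -t]) =
      (normOneUnits t 0).map
        (Units.map (Algebra.leftMulMatrix (QuadraticAlgebra.basis t 0))) := by
  ext M
  rw [Subgroup.mem_map]
  constructor
  · intro hM
    obtain ⟨h11, h01, hnorm⟩ := entries_of_mem_specialOrthogonalSubgroup h2 hM
    obtain ⟨z, hz, hzM⟩ := exists_mem_normOneUnits
      (z := (⟨M.val 0 0, M.val 1 0⟩ : QuadraticAlgebra R t 0))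
      (by rw [QuadraticAlgebra.norm_def]; linear_combination hnorm)
    refine ⟨z, hz, Units.ext ?_⟩
    calc Algebra.leftMulMatrix (QuadraticAlgebra.basis t 0) z
        = !![M.val 0 0, M.val 0 1; M.val 1 0, M.val 1 1] := by
          simp [leftMulMatrix_quadraticAlgebra_basis, hzM, h11, h01]
      _ = M.val := (eta_fin_two _).symm
  · rintro ⟨z, hz, rfl⟩
    rw [mem_normOneUnits, QuadraticAlgebra.norm_def] at hz
    simp only [mem_specialOrthogonalSubgroup, weightedSumSquares_one_neg_apply, Units.coe_map,
      MonoidHom.coe_coe, leftMulMatrix_quadraticAlgebra_basis]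
    refine ⟨?_, fun v ↦ ?_⟩
    · rw [det_fin_two_of]
      linear_combination hz
    · simp only [mulVec, dotProduct, Fin.sum_univ_two, of_apply, cons_val_zero, cons_val_one]
      linear_combination (v 0 ^ 2 - t * v 1 ^ 2) * hz

/-- The identification of the norm one elements of `R[X] / (X² - t)` with the special orthogonal
group of `x² - t y²`, given by multiplication matrices in the basis `1, X`. -/
noncomputable def normOneUnitsEquivSpecialOrthogonalSubgroup (h2 : IsLeftRegular (2 : R)) (t : R) :
    normOneUnits t 0 ≃* specialOrthogonalSubgroup (weightedSumSquares R ![1, -t]) :=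
  ((normOneUnits t 0).equivMapOfInjective _
    (Units.map_injective (Algebra.leftMulMatrix_injective _))).trans
    (MulEquiv.subgroupCongr (specialOrthogonalSubgroup_eq_map_normOneUnits h2 t).symm)

/-- Evaluation at `X = s` on the norm one elements of `R[X] / (X² - s²)`. -/
def normOneUnitsEval (s : R) : normOneUnits (s * s) 0 →* Rˣ :=
  (Units.map (QuadraticAlgebra.lift (a := s * s) (b := (0 : R)) ⟨s, by simp⟩ : _ →* R)).comp
    (normOneUnits (s * s) 0).subtype

theorem normOneUnitsEval_apply (s : R) (z : normOneUnits (s * s) 0) :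
    (normOneUnitsEval s z : R) = z.val.val.re + s * z.val.val.im := by
  simp [normOneUnitsEval, QuadraticAlgebra.lift, mul_comm]

theorem normOneUnitsEval_mul_conj (s : R) (z : normOneUnits (s * s) 0) :
    (normOneUnitsEval s z : R) * (z.val.val.re - s * z.val.val.im) = 1 := by
  have hz := mem_normOneUnits.1 z.2
  rw [QuadraticAlgebra.norm_def] at hz
  rw [normOneUnitsEval_apply]
  linear_combination hz

theorem normOneUnitsEval_injective {s : R} (hs : IsLeftRegular (2 * s)) :
    Function.Injective (normOneUnitsEval s) := by
  intro z w h
  have h_add : z.val.val.re + s * z.val.val.im = w.val.val.re + s * w.val.val.im := by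
    rw [← normOneUnitsEval_apply, ← normOneUnitsEval_apply, h]
  have h_sub : z.val.val.re - s * z.val.val.im = w.val.val.re - s * w.val.val.im := by
    apply (normOneUnitsEval s z).isUnit.mul_left_cancel
    rw [normOneUnitsEval_mul_conj, h, normOneUnitsEval_mul_conj]
  refine Subtype.ext (Units.ext (QuadraticAlgebra.ext (hs ?_) (hs ?_)))
  · linear_combination s * (h_add + h_sub)
  · linear_combination h_add - h_sub

theorem normOneUnitsEval_surjective {s : R} (hs : IsUnit (2 * s)) :
    Function.Surjective (normOneUnitsEval s) := by
  intro u
  obtain ⟨v, hv⟩ := hs.exists_right_inv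
  have hu : u.val * u⁻¹.val = 1 := u.mul_inv
  obtain ⟨z, hz, hzu⟩ := exists_mem_normOneUnits
    (z := (⟨s * v * (u.val + u⁻¹.val), v * (u.val - u⁻¹.val)⟩ : QuadraticAlgebra R (s * s) 0))
    (by
      rw [QuadraticAlgebra.norm_def]
      linear_combination (2 * s * v) ^ 2 * hu + (2 * s * v + 1) * hv)
  refine ⟨⟨z, hz⟩, Units.ext ?_⟩
  rw [normOneUnitsEval_apply, hzu]
  linear_combination u.val * hv

/-- The norm one elements of `R[X] / (X² - s²)` form a copy of `Rˣ`, by evaluation at `X = s`. The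
hypothesis makes `X - s` and `X + s` coprime. -/
noncomputable def normOneUnitsMulSelfEquiv {s : R} (hs : IsUnit (2 * s)) :
    normOneUnits (s * s) 0 ≃* Rˣ :=
  MulEquiv.ofBijective (normOneUnitsEval s)
    ⟨normOneUnitsEval_injective hs.isRegular.left, normOneUnitsEval_surjective hs⟩

theorem algebraNorm_eq_quadraticAlgebraNorm (z : QuadraticAlgebra R a b) :
    Algebra.norm R z = z.norm := by
  rw [Algebra.norm_apply, ← QuadraticAlgebra.det_toLinearMap_eq_norm]
  rfl

end NormOne

section FiniteField

variable {F : Type*} [Field F] [Finite F]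

theorem unitsMap_quadraticAlgebraNorm_surjective {a b : F} [Fact (∀ r, r ^ 2 ≠ a + b * r)] :
    Function.Surjective (Units.map (QuadraticAlgebra.norm (R := F) (a := a) (b := b))) := by
  have : Finite (QuadraticAlgebra F a b) := Module.finite_of_finite F
  convert FiniteField.unitsMap_norm_surjective F (QuadraticAlgebra F a b) using 2
  ext z
  exact (algebraNorm_eq_quadraticAlgebraNorm z.val).symm

theorem isCyclic_normOneUnits (a b : F) [Fact (∀ r, r ^ 2 ≠ a + b * r)] :
    IsCyclic (normOneUnits a b) := by
  have : Finite (QuadraticAlgebra F a b) := Module.finite_of_finite F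
  infer_instance

theorem natCard_normOneUnits (a b : F) [Fact (∀ r, r ^ 2 ≠ a + b * r)] :
    Nat.card (normOneUnits a b) = Nat.card F + 1 := by
  have index_eq : (normOneUnits a b).index = Nat.card F - 1 := by
    rw [normOneUnits, Subgroup.index_ker,
      MonoidHom.range_eq_top.2 unitsMap_quadraticAlgebraNorm_surjective, Subgroup.card_top,
      Nat.card_units]
  have one_lt_card : 1 < Nat.card F := Finite.one_lt_card
  refine Nat.eq_of_mul_eq_mul_right (Nat.sub_pos_of_lt one_lt_card) ?_
  calc Nat.card (normOneUnits a b) * (Nat.card F - 1)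
      = Nat.card (QuadraticAlgebra F a b)ˣ := by rw [← index_eq, Subgroup.card_mul_index]
    _ = Nat.card F ^ 2 - 1 := by
      rw [Nat.card_units, Module.natCard_eq_pow_finrank (K := F), QuadraticAlgebra.finrank_eq_two]
    _ = (Nat.card F + 1) * (Nat.card F - 1) := by rw [← Nat.sq_sub_sq, one_pow]

end FiniteField

theorem SOgt_cyclic_card_general {F : Type*} [Field F] [Fintype F] [DecidableEq F]
    (hF : ringChar F ≠ 2) {t : F} (ht : t ≠ 0) :
    IsCyclic (specialOrthogonalSubgroup (weightedSumSquares F ![1, -t])) ∧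
      (Nat.card (specialOrthogonalSubgroup (weightedSumSquares F ![1, -t])) : ℤ) =
        Fintype.card F - quadraticChar F t := by
  have h2 : (2 : F) ≠ 0 := Ring.two_ne_zero hF
  let mulEquiv := normOneUnitsEquivSpecialOrthogonalSubgroup (IsRegular.of_ne_zero h2).left t
  rw [← mulEquiv.isCyclic, ← Nat.card_congr mulEquiv.toEquiv]
  by_cases h : IsSquare t
  · rw [(quadraticChar_one_iff_isSquare ht).2 h]
    obtain ⟨s, rfl⟩ := h
    let evalEquiv := normOneUnitsMulSelfEquiv (mul_ne_zero h2 (left_ne_zero_of_mul ht)).isUnit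
    rw [evalEquiv.isCyclic, Nat.card_congr evalEquiv.toEquiv, Nat.card_units,
      Nat.card_eq_fintype_card, Nat.cast_pred Fintype.card_pos]
    exact ⟨inferInstance, rfl⟩
  · rw [quadraticChar_neg_one_iff_not_isSquare.2 h]
    have : Fact (∀ r, r ^ 2 ≠ t + 0 * r) :=
      ⟨fun r hr ↦ h ⟨r, by linear_combination -hr⟩⟩
    rw [natCard_normOneUnits, Nat.card_eq_fintype_card]
    exact ⟨isCyclic_normOneUnits t 0, by push_cast; ring⟩

/-- `SO(g_t)` is cyclic of order `p - χ(t)`. -/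
theorem SOgt_cyclic_card (p : ℕ) [Fact p.Prime] (hp : Odd p)
    (t : ZMod p) (ht : t ≠ 0) :
    IsCyclic (SOgt p t) ∧
      (Nat.card (SOgt p t) : ℤ) = (p : ℤ) - (if IsSquare t then 1 else -1) := by
  have h_ringChar : ringChar (ZMod p) ≠ 2 := by
    rw [ZMod.ringChar_zmod_n]
    exact hp.ne_two_of_dvd_nat dvd_rfl
  rw [SOgt_eq_specialOrthogonalSubgroup]
  simpa [quadraticChar_apply, quadraticCharFun, ht] using SOgt_cyclic_card_general h_ringChar ht
end

section
/- Let p be an odd prime, t ∈ F_p nonzero, and ψ ∈ SO(g_t) with characteristic polynomial x² + (2−v)x + 1 where v ∈ F_p is nonzero. Then v is a square in F_p if and only if |SO(g_t)| / ord(ψ) is even. -/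
open Matrix

section CyclicGroup

variable {G : Type*} [Group G] [Finite G] [IsCyclic G]

theorem exists_pow_eq_iff_dvd_card_div_orderOf {d : ℕ} (hd : d ∣ Nat.card G) (x : G) :
    (∃ y, y ^ d = x) ↔ d ∣ Nat.card G / orderOf x := by
  obtain ⟨g, hg⟩ := IsCyclic.exists_monoid_generator (α := G)
  have hcard : orderOf g = Nat.card G :=
    orderOf_eq_card_of_forall_mem_zpowers fun y => mem_powers_iff_mem_zpowers.1 (hg y)
  obtain ⟨k, rfl⟩ := hg x
  have hindex : Nat.card G / orderOf (g ^ k) = (Nat.card G).gcd k := by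
    rw [orderOf_pow, hcard, Nat.div_div_self (Nat.gcd_dvd_left _ _) Nat.card_pos.ne']
  simp only [hindex, Nat.dvd_gcd_iff, hd, true_and]
  constructor
  · rintro ⟨y, hy⟩
    obtain ⟨j, rfl⟩ := hg y
    have hmod : j * d ≡ k [MOD Nat.card G] := by
      rwa [← hcard, ← pow_eq_pow_iff_modEq, pow_mul]
    exact (hmod.dvd_iff hd).1 (dvd_mul_left d j)
  · rintro ⟨j, rfl⟩
    exact ⟨g ^ j, by rw [← pow_mul, mul_comm]⟩

theorem isSquare_iff_even_card_div_orderOf (hG : 2 ∣ Nat.card G) (x : G) :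
    IsSquare x ↔ Even (Nat.card G / orderOf x) := by
  rw [even_iff_two_dvd, ← exists_pow_eq_iff_dvd_card_div_orderOf hG, isSquare_iff_exists_sq]
  simp only [eq_comm]

end CyclicGroup

section TwoByTwo

variable {R : Type*} [CommRing R] (A : Matrix (Fin 2) (Fin 2) R)

theorem sq_add_one_fin_two_of_det_eq_one (hA : A.det = 1) : (A + 1) ^ 2 = (A.trace + 2) • A := by
  have hCayleyHamilton : A ^ 2 + 1 = A.trace • A := by
    nontriviality R
    have := aeval_self_charpoly A
    simp only [charpoly_fin_two, hA, map_add, map_sub, map_mul, map_pow, map_one,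
      Polynomial.aeval_X, Polynomial.aeval_C, ← Algebra.smul_def] at this
    rwa [sub_add_eq_add_sub, sub_eq_zero] at this
  calc (A + 1) ^ 2 = (A ^ 2 + 1) + (A + A) := by noncomm_ring
    _ = (A.trace + 2) • A := by rw [hCayleyHamilton, add_smul, two_smul]

theorem det_add_one_fin_two : (A + 1).det = A.det + A.trace + 1 := by
  simp only [det_fin_two, trace_fin_two, Matrix.add_apply, one_apply_eq, ne_eq, zero_ne_one,
    one_ne_zero, not_false_eq_true, one_apply_ne, add_zero]
  ring

theorem trace_sq_fin_two : (A ^ 2).trace = A.trace ^ 2 - 2 * A.det := by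
  simp only [sq, trace_fin_two, det_fin_two, mul_apply, Fin.sum_univ_two]
  ring

end TwoByTwo

/-- The quadratic form `g_t(x, y) = x² - t y²`. -/
def normForm {R : Type*} [CommRing R] (t : R) (x : Fin 2 → R) : R :=
  x 0 ^ 2 - t * x 1 ^ 2

/-- The special orthogonal group of `normForm t` over an arbitrary commutative ring, as a group of
invertible matrices of determinant one. -/
def normFormSO {R : Type*} [CommRing R] (t : R) : Subgroup (Matrix (Fin 2) (Fin 2) R)ˣ where
  carrier := {M | M.1.det = 1 ∧ ∀ x, normForm t (M.1 *ᵥ x) = normForm t x}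
  one_mem' := ⟨by simp, fun x => by rw [Units.val_one, one_mulVec]⟩
  mul_mem' := by
    rintro M N ⟨hM, hMt⟩ ⟨hN, hNt⟩
    exact ⟨by simp [hM, hN], fun x => by rw [Units.val_mul, ← mulVec_mulVec, hMt, hNt]⟩
  inv_mem' := by
    rintro M ⟨hM, hMt⟩
    refine ⟨by simp [hM], fun x => ?_⟩
    rw [← hMt, mulVec_mulVec, Units.mul_inv, one_mulVec]

/-- The matrix of multiplication by `√t` on `R[√t]` in the basis `1, √t`. The form `normForm t` is
the norm of `R[√t]`. -/
def sqrtMatrix {R : Type*} [CommRing R] (t : R) : Matrix (Fin 2) (Fin 2) R :=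
  !![0, t; 1, 0]

theorem commute_sqrtMatrix_iff {R : Type*} [CommRing R] {t : R} {A : Matrix (Fin 2) (Fin 2) R} :
    Commute A (sqrtMatrix t) ↔ A 0 1 = t * A 1 0 ∧ A 1 1 = A 0 0 := by
  rw [commute_iff_eq, ← Matrix.ext_iff]
  simp only [sqrtMatrix, Fin.forall_fin_two, mul_apply, Fin.sum_univ_two, of_apply, cons_val',
    cons_val_zero, cons_val_one, cons_val_fin_one, mul_zero, mul_one, zero_mul, one_mul, zero_add,
    add_zero]
  grind

namespace normFormSO

section CommRing

variable {R : Type*} [CommRing R] {t : R}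

theorem det_eq_one (M : normFormSO t) : M.1.1.det = 1 := M.2.1

variable [NoZeroDivisors R] [NeZero (2 : R)]

theorem mem_iff_commute {M : (Matrix (Fin 2) (Fin 2) R)ˣ} :
    M ∈ normFormSO t ↔ M.1.det = 1 ∧ Commute M.1 (sqrtMatrix t) := by
  refine and_congr_right fun hdet => ?_
  rw [commute_sqrtMatrix_iff]
  rw [det_fin_two] at hdet
  simp only [normForm, mulVec, dotProduct, Fin.sum_univ_two]
  constructor
  · intro hform
    have hfst : M.1 0 0 ^ 2 - t * M.1 1 0 ^ 2 = 1 := by simpa using hform ![1, 0]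
    have hsnd : M.1 0 1 ^ 2 - t * M.1 1 1 ^ 2 = -t := by simpa using hform ![0, 1]
    have hsum : (M.1 0 0 + M.1 0 1) ^ 2 - t * (M.1 1 0 + M.1 1 1) ^ 2 = 1 - t := by
      simpa using hform ![1, 1]
    have hpolar : M.1 0 0 * M.1 0 1 = t * M.1 1 0 * M.1 1 1 :=
      mul_left_cancel₀ (NeZero.ne (2 : R)) (by linear_combination hsum - hfst - hsnd)
    constructor
    · linear_combination -M.1 0 1 * hfst + M.1 0 0 * hpolar + t * M.1 1 0 * hdet
    · linear_combination -M.1 1 1 * hfst + M.1 1 0 * hpolar + M.1 0 0 * hdet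
  · rintro ⟨h₀₁, h₁₁⟩ x
    rw [h₀₁, h₁₁] at hdet ⊢
    linear_combination (x 0 ^ 2 - t * x 1 ^ 2) * hdet

theorem exists_coe_eq {A : Matrix (Fin 2) (Fin 2) R} (hdet : A.det = 1)
    (hcomm : Commute A (sqrtMatrix t)) : ∃ M : normFormSO t, M.1.1 = A :=
  ⟨⟨A.nonsingInvUnit (hdet ▸ isUnit_one), mem_iff_commute.2 ⟨hdet, hcomm⟩⟩, rfl⟩

theorem two_dvd_card (t : R) : 2 ∣ Nat.card (normFormSO t) := by
  have hmem : (-1 : (Matrix (Fin 2) (Fin 2) R)ˣ) ∈ normFormSO t :=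
    mem_iff_commute.2 ⟨by simp [det_neg], by simp⟩
  have hne : (-1 : (Matrix (Fin 2) (Fin 2) R)ˣ) ≠ 1 := by
    intro h
    have h₀₀ : (-1 : R) = 1 := by simpa using congrArg (fun M => M.1 0 0) h
    exact NeZero.ne (2 : R) (by linear_combination -h₀₀)
  have horder : orderOf (⟨-1, hmem⟩ : normFormSO t) = 2 := by
    rw [Subgroup.orderOf_mk]
    exact orderOf_eq_prime (by simp) hne
  exact horder.symm.dvd.trans (orderOf_dvd_natCard _)

/-- The eigenvalue of a rotation on the row eigenvector `(1, s)`, where `s` is a square root of `t`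
in an extension `S` of `R`. -/
def eigenvalue {S : Type*} [CommRing S] [Algebra R S] {s : S} (hs : s ^ 2 = algebraMap R S t) :
    normFormSO t →* S where
  toFun M := algebraMap R S (M.1.1 0 0) + algebraMap R S (M.1.1 1 0) * s
  map_one' := by simp
  map_mul' M N := by
    obtain ⟨h₀₁, h₁₁⟩ := commute_sqrtMatrix_iff.1 (mem_iff_commute.1 M.2).2
    simp only [Subgroup.coe_mul, Units.val_mul, mul_apply, Fin.sum_univ_two, h₀₁, h₁₁, map_add,
      map_mul, ← hs]
    ring

theorem eigenvalue_mul_conj {S : Type*} [CommRing S] [Algebra R S] {s : S}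
    (hs : s ^ 2 = algebraMap R S t) (M : normFormSO t) :
    eigenvalue hs M * (algebraMap R S (M.1.1 0 0) - algebraMap R S (M.1.1 1 0) * s) = 1 := by
  obtain ⟨h₀₁, h₁₁⟩ := commute_sqrtMatrix_iff.1 (mem_iff_commute.1 M.2).2
  have hdet : M.1.1 0 0 * M.1.1 0 0 - t * M.1.1 1 0 * M.1.1 1 0 = 1 := by
    simpa only [det_fin_two, h₀₁, h₁₁] using det_eq_one M
  rw [← map_one (algebraMap R S), ← hdet]
  simp only [eigenvalue, MonoidHom.coe_mk, OneHom.coe_mk, map_sub, map_mul, ← hs]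
  ring

end CommRing

section Field

variable {F : Type*} [Field F] [NeZero (2 : F)] {t : F}

theorem eigenvalue_injective {K : Type*} [Field K] [Algebra F K] (ht : t ≠ 0) {s : K}
    (hs : s ^ 2 = algebraMap F K t) : Function.Injective (eigenvalue hs) := by
  rw [injective_iff_map_eq_one]
  intro M hM
  obtain ⟨h₀₁, h₁₁⟩ := commute_sqrtMatrix_iff.1 (mem_iff_commute.1 M.2).2
  have hconj : algebraMap F K (M.1.1 0 0) - algebraMap F K (M.1.1 1 0) * s = 1 := by
    simpa only [hM, one_mul] using eigenvalue_mul_conj hs M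
  replace hM : algebraMap F K (M.1.1 0 0) + algebraMap F K (M.1.1 1 0) * s = 1 := hM
  have h2 : (2 : K) ≠ 0 := by
    rw [← map_ofNat (algebraMap F K) 2]
    exact (map_ne_zero (algebraMap F K)).2 (NeZero.ne (2 : F))
  have hs₀ : s ≠ 0 := by
    rintro rfl
    exact (map_ne_zero (algebraMap F K)).2 ht (by simpa using hs.symm)
  have h₀₀ : M.1.1 0 0 = 1 := by
    apply (algebraMap F K).injective
    exact mul_left_cancel₀ h2 (by rw [map_one]; linear_combination hM + hconj)
  have h₁₀ : M.1.1 1 0 = 0 := by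
    apply (algebraMap F K).injective
    exact mul_left_cancel₀ (mul_ne_zero h2 hs₀)
      (by rw [map_zero]; linear_combination hM - hconj)
  ext i j
  fin_cases i <;> fin_cases j <;> simp [h₀₀, h₁₀, h₀₁, h₁₁]

theorem isCyclic [Finite (normFormSO t)] (ht : t ≠ 0) : IsCyclic (normFormSO t) := by
  obtain ⟨s, hs⟩ :=
    IsAlgClosed.exists_pow_nat_eq (algebraMap F (AlgebraicClosure F) t) zero_lt_two
  exact isCyclic_of_injective_ringHom (eigenvalue hs) (eigenvalue_injective ht hs)

theorem exists_sq_eq_of_trace_add_two_eq_sq {ψ : normFormSO t} {w : F} (hw : w ≠ 0)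
    (hψ : ψ.1.1.trace + 2 = w ^ 2) : ∃ M : normFormSO t, M ^ 2 = ψ := by
  have hdet : (w⁻¹ • (ψ.1.1 + 1)).det = 1 := by
    have hdet_add : (ψ.1.1 + 1).det = w ^ 2 := by
      rw [det_add_one_fin_two, det_eq_one]
      linear_combination hψ
    rw [det_smul, hdet_add, Fintype.card_fin, inv_pow, inv_mul_cancel₀ (pow_ne_zero 2 hw)]
  have hcomm : Commute (w⁻¹ • (ψ.1.1 + 1)) (sqrtMatrix t) :=
    ((mem_iff_commute.1 ψ.2).2.add_left (.one_left _)).smul_left _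
  obtain ⟨M, hM⟩ := exists_coe_eq hdet hcomm
  refine ⟨M, Subtype.ext (Units.ext ?_)⟩
  calc M.1.1 ^ 2 = (w⁻¹ ^ 2 * w ^ 2) • ψ.1.1 := by
        rw [hM, smul_pow, sq_add_one_fin_two_of_det_eq_one _ (det_eq_one ψ), hψ, smul_smul]
    _ = ψ.1.1 := by rw [← mul_pow, inv_mul_cancel₀ hw, one_pow, one_smul]

theorem isSquare_trace_add_two_iff {ψ : normFormSO t} (hψ : ψ.1.1.trace + 2 ≠ 0) :
    IsSquare (ψ.1.1.trace + 2) ↔ IsSquare ψ := by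
  simp only [isSquare_iff_exists_sq]
  constructor
  · rintro ⟨w, hw⟩
    have hw₀ : w ≠ 0 := by
      rintro rfl
      exact hψ (by simpa using hw)
    obtain ⟨M, rfl⟩ := exists_sq_eq_of_trace_add_two_eq_sq hw₀ hw
    exact ⟨M, rfl⟩
  · rintro ⟨M, rfl⟩
    refine ⟨M.1.1.trace, ?_⟩
    rw [Subgroup.coe_pow, Units.val_pow_eq_pow_val, trace_sq_fin_two, det_eq_one]
    ring

end Field

end normFormSO

open Polynomial in
theorem SOgt_square_iff_index_even_general {F : Type*} [Field F] [Finite F] [NeZero (2 : F)]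
    {t v : F} (ht : t ≠ 0) (hv : v ≠ 0) (ψ : normFormSO t)
    (hψ : ψ.1.1.charpoly = X ^ 2 + C (2 - v) * X + 1) :
    IsSquare v ↔ Even (Nat.card (normFormSO t) / orderOf ψ) := by
  have htrace : ψ.1.1.trace + 2 = v := by
    rw [trace_eq_neg_charpoly_coeff, hψ]
    simp [coeff_one, coeff_X_pow]
  have hcyclic : IsCyclic (normFormSO t) := normFormSO.isCyclic ht
  rw [← isSquare_iff_even_card_div_orderOf (normFormSO.two_dvd_card t),
    ← normFormSO.isSquare_trace_add_two_iff (htrace ▸ hv), htrace]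

open Polynomial in
/-- For `ψ ∈ SO(g_t)` with characteristic polynomial `x² + (2 - v)x + 1`, `v ≠ 0`,
`v` is a square iff `|SO(g_t)| / ord(ψ)` is even. -/
theorem SOgt_square_iff_index_even (p : ℕ) [Fact p.Prime] (hp : Odd p)
    (t : ZMod p) (ht : t ≠ 0) (v : ZMod p) (hv : v ≠ 0) (ψ : SOgt p t)
    (hchar : ((ψ : (Matrix (Fin 2) (Fin 2) (ZMod p))ˣ) :
        Matrix (Fin 2) (Fin 2) (ZMod p)).charpoly = X ^ 2 + C (2 - v) * X + 1) :
    IsSquare v ↔ Even (Nat.card (SOgt p t) / orderOf ψ) := by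
  have : NeZero (2 : ZMod p) :=
    ⟨Ring.two_ne_zero (by simpa [ZMod.ringChar_zmod_n] using hp.ne_two_of_dvd_nat dvd_rfl)⟩
  -- `SOgt p t` and `normFormSO t` agree by unfolding.
  exact SOgt_square_iff_index_even_general ht hv ψ hchar
end

section
/- Let p be an odd prime, t, u ∈ F_p nonzero, and ψ ∈ SO(g_t) with characteristic polynomial x² + (2−v)x + 1, v ≠ 0. Then the sign of the permutation induced by ψ on the affine conic D_{t,u} = {(x,y) : x² − t y² = u} equals the Legendre symbol (v/p). -/
section Perm

open Equiv.Perm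

theorem sign_eq_neg_one_of_forall_sameCycle {α : Type*} [Fintype α] [DecidableEq α] [Nonempty α]
    {f : Equiv.Perm α} (hf : ∀ x y, f.SameCycle x y) (hα : Even (Fintype.card α)) :
    sign f = -1 := by
  have : Nontrivial α := Fintype.one_lt_card_iff_nontrivial.1 <| by
    have := Fintype.card_pos (α := α)
    grind
  have hcycleOn : f.IsCycleOn Set.univ :=
    ⟨Set.bijOn_univ.2 f.bijective, fun x _ y _ ↦ hf x y⟩
  have hcycle : f.IsCycle :=
    isCycle_iff_exists_isCycleOn.2
      ⟨Set.univ, Set.nontrivial_univ, hcycleOn, fun x _ ↦ Set.mem_univ x⟩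
  have hsupport : f.support = Finset.univ := Finset.eq_univ_of_forall fun x ↦
    mem_support.2 (hcycleOn.apply_ne Set.nontrivial_univ (Set.mem_univ x))
  rw [hcycle.sign, hsupport, Finset.card_univ, hα.neg_one_pow]

theorem sign_toPerm_eq_ite_isSquare {G α : Type*} [Group G] [IsCyclic G] [MulAction G α]
    [MulAction.IsPretransitive G α] [Fintype α] [DecidableEq α] [Nonempty α]
    (hα : Even (Fintype.card α)) (g : G) [Decidable (IsSquare g)] :
    sign (MulAction.toPerm g : Equiv.Perm α) = if IsSquare g then 1 else -1 := by
  let signHom : G →* ℤˣ := sign.comp (MulAction.toPermHom G α)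
  change signHom g = _
  split_ifs with hg
  · obtain ⟨h, rfl⟩ := hg
    rw [map_mul, Int.units_mul_self]
  · obtain ⟨γ, hγ⟩ := IsCyclic.exists_generator (α := G)
    have hsign : signHom γ = -1 := by
      refine sign_eq_neg_one_of_forall_sameCycle (fun x y ↦ ?_) hα
      obtain ⟨h, rfl⟩ := MulAction.exists_smul_eq G x y
      obtain ⟨k, rfl⟩ := hγ h
      exact ⟨k, by rw [← map_zpow]; rfl⟩
    obtain ⟨k, rfl⟩ := hγ g
    have hk : Odd k := Int.not_even_iff_odd.1 fun hk ↦ hg (hk.isSquare_zpow γ)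
    rw [map_zpow, hsign, hk.neg_one_zpow]

end Perm

section NormOneGroup

open QuadraticAlgebra

theorem eq_zero_of_map_eq_zero_of_map_star_eq_zero {K L : Type*} [Field K] [CommRing L]
    [Nontrivial L] [Algebra K L] {a b : K} (hab : b ^ 2 + 4 * a ≠ 0)
    (φ : QuadraticAlgebra K a b →ₐ[K] L) {z : QuadraticAlgebra K a b}
    (hz : φ z = 0) (hz_star : φ (star z) = 0) : z = 0 := by
  have hsq : (z - star z) ^ 2 = algebraMap K _ ((b ^ 2 + 4 * a) * z.im ^ 2) := by
    ext <;> simp [sq] <;> ring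
  have him : z.im = 0 := by
    have h : algebraMap K L ((b ^ 2 + 4 * a) * z.im ^ 2) = 0 := by
      rw [← φ.commutes, ← hsq, map_pow, map_sub, hz, hz_star, sub_zero, zero_pow two_ne_zero]
    rw [FaithfulSMul.algebraMap_eq_zero_iff, mul_eq_zero] at h
    exact (pow_eq_zero_iff two_ne_zero).1 (h.resolve_left hab)
  have hz_eq : z = algebraMap K _ z.re := QuadraticAlgebra.ext rfl him
  have hre : z.re = 0 := by
    rw [hz_eq, φ.commutes] at hz
    exact (FaithfulSMul.algebraMap_eq_zero_iff K L).1 hz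
  exact QuadraticAlgebra.ext hre him

theorem algHom_unitary_injective {K L : Type*} [Field K] [CommRing L] [Nontrivial L]
    [Algebra K L] {a b : K} (hab : b ^ 2 + 4 * a ≠ 0) (φ : QuadraticAlgebra K a b →ₐ[K] L) :
    Function.Injective fun g : unitary (QuadraticAlgebra K a b) ↦ φ g := by
  intro g h (hgh : φ g = φ h)
  have hstar : φ (star g.1) = φ (star h.1) := by
    calc φ (star g.1) = φ (star g.1) * φ (h * star h.1) := by
          rw [Unitary.mul_star_self_of_mem h.2, map_one, mul_one]
      _ = φ (star g.1 * g) * φ (star h.1) := by rw [map_mul, map_mul, hgh, mul_assoc]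
      _ = φ (star h.1) := by rw [Unitary.star_mul_self_of_mem g.2, map_one, one_mul]
  refine Subtype.ext (sub_eq_zero.1 (eq_zero_of_map_eq_zero_of_map_star_eq_zero hab φ ?_ ?_))
  · rw [map_sub, hgh, sub_self]
  · rw [star_sub, map_sub, hstar, sub_self]

theorem isCyclic_unitary_quadraticAlgebra {K : Type*} [Field K] [Finite K] {a b : K}
    (hab : b ^ 2 + 4 * a ≠ 0) : IsCyclic (unitary (QuadraticAlgebra K a b)) := by
  have : Finite (QuadraticAlgebra K a b) := .of_equiv _ (equivProd a b).symm
  obtain ⟨s, hs⟩ := IsAlgClosed.exists_aeval_eq_zero (AlgebraicClosure K)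
    (.C 1 * .X ^ 2 + .C (-b) * .X + .C (-a) : Polynomial K)
    (by rw [Polynomial.degree_quadratic one_ne_zero]; decide)
  have hs' : s * s = a • 1 + b • s := by
    simp only [map_add, map_mul, map_pow, map_neg, map_one, Polynomial.aeval_X,
      Polynomial.aeval_C] at hs
    simp only [Algebra.smul_def, mul_one]
    linear_combination hs
  let φ : QuadraticAlgebra K a b →ₐ[K] AlgebraicClosure K := lift ⟨s, hs'⟩
  exact isCyclic_of_injective_ringHom
    ((φ : _ →* AlgebraicClosure K).comp (unitary (QuadraticAlgebra K a b)).subtype)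
    (algHom_unitary_injective hab φ)

theorem quadraticAlgebra_norm_one_add {R : Type*} [CommRing R] {a b : R}
    (z : QuadraticAlgebra R a b) :
    norm (1 + z) = 1 + trace z + norm z := by
  simp only [norm_def, trace_def, re_add, im_add, re_one, im_one]
  ring

theorem quadraticAlgebra_trace_mul_self {R : Type*} [CommRing R] {a b : R}
    (z : QuadraticAlgebra R a b) :
    trace (z * z) = trace z * trace z - 2 * norm z := by
  simp only [norm_def, trace_def, re_mul, im_mul]
  ring

-- If `g = h²` then `2 + tr g = (tr h)²`; if `2 + tr g = w²` then `g = ((1 + g) / w)²`.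
theorem isSquare_unitary_iff {K : Type*} [Field K] {a b : K}
    {g : unitary (QuadraticAlgebra K a b)} (hg : 2 + trace g.1 ≠ 0) :
    IsSquare g ↔ IsSquare (2 + trace g.1) := by
  constructor
  · rintro ⟨h, rfl⟩
    have hnorm : norm h.1 = 1 := norm_eq_one_iff_mem_unitary.2 h.2
    exact ⟨trace h.1, by rw [Submonoid.coe_mul, quadraticAlgebra_trace_mul_self, hnorm]; ring⟩
  · rintro ⟨w, hw⟩
    have hw0 : w ≠ 0 := by
      rintro rfl
      exact hg (by rw [hw, mul_zero])
    have hnorm : norm g.1 = 1 := norm_eq_one_iff_mem_unitary.2 g.2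
    have hnorm_add : norm (1 + g.1) = w * w := by
      rw [quadraticAlgebra_norm_one_add, hnorm, ← hw]
      ring
    have hsq : (1 + g.1) * (1 + g.1) = algebraMap K _ (w * w) * g := by
      have := sq_eq_trace_smul_sub_norm g.1
      rw [hnorm, Algebra.smul_def, map_one] at this
      rw [← hw, map_add, map_ofNat]
      linear_combination this
    have hh : norm (algebraMap K _ w⁻¹ * (1 + g.1)) = 1 := by
      rw [map_mul, QuadraticAlgebra.norm_algebraMap, hnorm_add]
      field_simp
    refine ⟨⟨_, norm_eq_one_iff_mem_unitary.1 hh⟩, Subtype.ext ?_⟩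
    calc g.1 = algebraMap K _ (w⁻¹ * w⁻¹ * (w * w)) * g := by
          rw [show w⁻¹ * w⁻¹ * (w * w) = 1 by field_simp, map_one, one_mul]
      _ = algebraMap K _ (w⁻¹ * w⁻¹) * ((1 + g.1) * (1 + g.1)) := by
          rw [hsq, map_mul]; ring
      _ = algebraMap K _ w⁻¹ * (1 + g.1) * (algebraMap K _ w⁻¹ * (1 + g.1)) := by
          rw [map_mul]; ring

theorem exists_unitary_eq_of_isometry {R : Type*} [CommRing R] [NoZeroDivisors R]
    (h2 : (2 : R) ≠ 0) {t : R} {M : Matrix (Fin 2) (Fin 2) R} (hdet : M.det = 1)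
    (hM : ∀ w, M.mulVec w 0 ^ 2 - t * M.mulVec w 1 ^ 2 = w 0 ^ 2 - t * w 1 ^ 2) :
    ∃ g : unitary (QuadraticAlgebra R t 0), M = !![g.1.re, t * g.1.im; g.1.im, g.1.re] := by
  have h10 := hM ![1, 0]
  have h01 := hM ![0, 1]
  have h11 := hM ![1, 1]
  simp only [Matrix.mulVec, dotProduct, Fin.sum_univ_two, Matrix.cons_val_zero,
    Matrix.cons_val_one, Matrix.cons_val_fin_one] at h10 h01 h11
  rw [Matrix.det_fin_two] at hdet
  have horth : M 0 0 * M 0 1 = t * M 1 0 * M 1 1 := by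
    apply mul_left_cancel₀ h2
    linear_combination h11 - h10 - h01
  have hdiag : M 1 1 = M 0 0 := by
    linear_combination -M 1 1 * h10 + M 0 0 * hdet + M 1 0 * horth
  have hoff : M 0 1 = t * M 1 0 := by
    linear_combination -M 0 1 * h10 + M 0 0 * horth + t * M 1 0 * hdet
  have hnorm : norm (⟨M 0 0, M 1 0⟩ : QuadraticAlgebra R t 0) = 1 := by
    rw [norm_def]
    linear_combination h10
  refine ⟨⟨_, norm_eq_one_iff_mem_unitary.1 hnorm⟩, ?_⟩
  calc M = !![M 0 0, M 0 1; M 1 0, M 1 1] := M.eta_fin_two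
    _ = _ := by rw [hdiag, hoff]

/-- The conic `x² + bxy - ay² = u`, encoded as the set of elements of norm `u` in the quadratic
algebra `R[ω]` with `ω² = a + bω`. -/
abbrev NormFiber {R : Type*} [CommRing R] (a b u : R) : Type _ :=
  {z : QuadraticAlgebra R a b // z.norm = u}

namespace NormFiber

section CommRing

variable {R : Type*} [CommRing R] {a b u : R}

instance : MulAction (unitary (QuadraticAlgebra R a b)) (NormFiber a b u) where
  smul g z := ⟨g * z, by rw [map_mul, norm_eq_one_iff_mem_unitary.2 g.2, z.2, one_mul]⟩
  one_smul z := Subtype.ext (one_mul _)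
  mul_smul g h z := Subtype.ext (mul_assoc _ _ _)

theorem coe_smul (g : unitary (QuadraticAlgebra R a b)) (z : NormFiber a b u) :
    (g • z : NormFiber a b u).1 = g * z.1 := rfl

end CommRing

section Field

variable {K : Type*} [Field K] {a b u : K}

theorem isPretransitive (hu : u ≠ 0) :
    MulAction.IsPretransitive (unitary (QuadraticAlgebra K a b)) (NormFiber a b u) where
  exists_smul_eq x y := by
    have hg : norm (algebraMap K _ u⁻¹ * y.1 * star x.1) = 1 := by
      rw [map_mul, map_mul, QuadraticAlgebra.norm_algebraMap, QuadraticAlgebra.norm_star, x.2, y.2]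
      field_simp
    refine ⟨⟨_, norm_eq_one_iff_mem_unitary.1 hg⟩, Subtype.ext ?_⟩
    calc algebraMap K _ u⁻¹ * y.1 * star x.1 * x.1
        = algebraMap K _ u⁻¹ * y.1 * (x.1 * star x.1) := by ring
      _ = algebraMap K _ (u⁻¹ * u) * y.1 := by
        rw [← algebraMap_norm_eq_mul_star, x.2, map_mul]; ring
      _ = y.1 := by rw [inv_mul_cancel₀ hu, map_one, one_mul]

theorem even_card [Fintype (NormFiber a b u)] (h2 : (2 : K) ≠ 0) (hu : u ≠ 0) :
    Even (Fintype.card (NormFiber a b u)) := by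
  classical
  let neg : Equiv.Perm (NormFiber a b u) :=
    MulAction.toPerm (-1 : unitary (QuadraticAlgebra K a b))
  have hneg_sq : neg ^ 2 = 1 := by
    ext1 z
    simp [neg, sq, smul_smul]
  have hneg_ne (z : NormFiber a b u) : neg z ≠ z := by
    intro hz
    have hz' : -z.1 = z.1 := by simpa [neg, coe_smul, Unitary.coe_neg] using congrArg Subtype.val hz
    have hz0 : z.1 = 0 := by
      have h : (2 : K) • z.1 = 0 := by rw [two_smul]; nth_rw 1 [← hz']; simp
      simpa [h2] using h
    exact hu (by rw [← z.2, hz0, QuadraticAlgebra.norm_zero])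
  have hsupport : neg.support = Finset.univ :=
    Finset.eq_univ_of_forall fun z ↦ Equiv.Perm.mem_support.2 (hneg_ne z)
  rw [even_iff_two_dvd, ← Finset.card_univ, ← hsupport]
  exact Equiv.Perm.two_dvd_card_support hneg_sq

theorem nonempty [Finite K] (hK : ringChar K ≠ 2) (hab : b ^ 2 + 4 * a ≠ 0) (u : K) :
    Nonempty (NormFiber a b u) := by
  have := Fintype.ofFinite K
  have h2 : (2 : K) ≠ 0 := Ring.two_ne_zero hK
  obtain ⟨c, rfl⟩ : ∃ c, b = 2 * c := ⟨b / 2, (mul_div_cancel₀ b h2).symm⟩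
  have hac : a + c ^ 2 ≠ 0 := by
    contrapose! hab
    linear_combination 4 * hab
  -- `x² + 2cxy - ay² = (x + cy)² - (a + c²)y²`
  obtain ⟨x, y, hxy⟩ := FiniteField.exists_root_sum_quadratic
    (Polynomial.degree_X_pow_sub_C two_pos u)
    (Polynomial.degree_C_mul_X_pow 2 (neg_ne_zero.2 hac))
    (FiniteField.odd_card_of_char_ne_two hK)
  refine ⟨⟨x - c * y, y⟩, ?_⟩
  simp only [Polynomial.eval_sub, Polynomial.eval_mul, Polynomial.eval_pow, Polynomial.eval_X,
    Polynomial.eval_C] at hxy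
  rw [norm_def]
  linear_combination hxy

theorem sign_toPerm [Finite K] [Fintype (NormFiber a b u)] [DecidableEq (NormFiber a b u)]
    (hK : ringChar K ≠ 2) (hab : b ^ 2 + 4 * a ≠ 0) (hu : u ≠ 0)
    {g : unitary (QuadraticAlgebra K a b)} (hg : 2 + trace g.1 ≠ 0)
    [Decidable (IsSquare (2 + trace g.1))] :
    Equiv.Perm.sign (MulAction.toPerm g : Equiv.Perm (NormFiber a b u)) =
      if IsSquare (2 + trace g.1) then 1 else -1 := by
  classical
  have := isCyclic_unitary_quadraticAlgebra hab
  have := isPretransitive (a := a) (b := b) hu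
  have := nonempty hK hab u
  have heven := even_card (a := a) (b := b) (Ring.two_ne_zero hK) hu
  simp only [sign_toPerm_eq_ite_isSquare heven g, isSquare_unitary_iff hg]

end Field

/-- The identification of the norm-`u` elements of `R[√t]` with the conic `x² - ty² = u`. -/
def equivConic {R : Type*} [CommRing R] (t u : R) :
    NormFiber t 0 u ≃ {w : Fin 2 → R // w 0 ^ 2 - t * w 1 ^ 2 = u} :=
  (linearEquivTuple t 0).toEquiv.subtypeEquiv fun z ↦ by
    simp [norm_def, sq, mul_assoc]

theorem coe_equivConic_smul {R : Type*} [CommRing R] {t u : R}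
    (g : unitary (QuadraticAlgebra R t 0)) (z : NormFiber t 0 u) :
    (equivConic t u (g • z)).1 =
      !![g.1.re, t * g.1.im; g.1.im, g.1.re].mulVec (equivConic t u z).1 := by
  ext i
  fin_cases i <;> simp [equivConic, coe_smul, Matrix.mulVec, dotProduct, add_comm]

end NormFiber

end NormOneGroup

open Polynomial in
theorem sign_of_SOgt_on_conic_general {K : Type*} [Field K] [Fintype K] [DecidableEq K]
    (hK : ringChar K ≠ 2) {t u v : K} (ht : t ≠ 0) (hu : u ≠ 0) (hv : v ≠ 0)
    {M : Matrix (Fin 2) (Fin 2) K}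
    (hM : ∀ w, M.mulVec w 0 ^ 2 - t * M.mulVec w 1 ^ 2 = w 0 ^ 2 - t * w 1 ^ 2)
    (hchar : M.charpoly = X ^ 2 + C (2 - v) * X + 1)
    (σ : Equiv.Perm {w : Fin 2 → K // w 0 ^ 2 - t * w 1 ^ 2 = u})
    (hσ : ∀ x, (σ x).val = M.mulVec x.val) :
    Equiv.Perm.sign σ = if IsSquare v then 1 else -1 := by
  classical
  have h2 : (2 : K) ≠ 0 := Ring.two_ne_zero hK
  have hdet : M.det = 1 := by
    simp [Matrix.det_eq_sign_charpoly_coeff, hchar]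
  have htrace : M.trace = v - 2 := by
    simp [Matrix.trace_eq_neg_charpoly_coeff, hchar, coeff_one]
  obtain ⟨g, rfl⟩ := exists_unitary_eq_of_isometry h2 hdet hM
  have hg : 2 + QuadraticAlgebra.trace g.1 = v := by
    rw [Matrix.trace_fin_two_of] at htrace
    rw [QuadraticAlgebra.trace_def]
    linear_combination htrace
  have hdisc : (0 : K) ^ 2 + 4 * t ≠ 0 := by
    rw [show (0 : K) ^ 2 + 4 * t = 2 * 2 * t by ring]
    exact mul_ne_zero (mul_ne_zero h2 h2) ht
  have := Fintype.ofEquiv _ (NormFiber.equivConic t u).symm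
  have hequiv (z : NormFiber t 0 u) :
      NormFiber.equivConic t u (g • z) = σ (NormFiber.equivConic t u z) :=
    Subtype.ext ((NormFiber.coe_equivConic_smul g z).trans (hσ _).symm)
  subst hg
  rw [← Equiv.Perm.sign_eq_sign_of_equiv (MulAction.toPerm g) σ _ hequiv,
    NormFiber.sign_toPerm hK hdisc hu hv]

open Polynomial in
/-- The sign of the permutation induced on the affine conic `x² - t y² = u` by
`ψ ∈ SO(g_t)` with characteristic polynomial `x² + (2 - v)x + 1` is the
quadratic character of `v`. -/
theorem sign_of_SOgt_on_conic (p : ℕ) [Fact p.Prime] (hp : Odd p)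
    (t u : ZMod p) (ht : t ≠ 0) (hu : u ≠ 0) (v : ZMod p) (hv : v ≠ 0)
    (ψ : SOgt p t)
    (hchar : ((ψ : (Matrix (Fin 2) (Fin 2) (ZMod p))ˣ) :
        Matrix (Fin 2) (Fin 2) (ZMod p)).charpoly = X ^ 2 + C (2 - v) * X + 1)
    (σ : Equiv.Perm {w : Fin 2 → ZMod p // (w 0) ^ 2 - t * (w 1) ^ 2 = u})
    (hσ : ∀ x, (σ x).val =
      ((ψ : (Matrix (Fin 2) (Fin 2) (ZMod p))ˣ) :
        Matrix (Fin 2) (Fin 2) (ZMod p)).mulVec x.val) :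
    Equiv.Perm.sign σ = (if IsSquare v then 1 else -1 : ℤˣ) := by
  have hp2 : ringChar (ZMod p) ≠ 2 := by
    rw [ZMod.ringChar_zmod_n]
    rintro rfl
    exact absurd hp (by decide)
  exact sign_of_SOgt_on_conic_general hp2 ht hu hv ψ.2.2 hchar σ hσ
end
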